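/- arXiv:1909.10994 — 6 statements merged into one kernel-verified Lean document; each statement's English description precedes it below -/
import Mathlib

section
/- Let T be a labeled binary tree over the signature σ = {E1, E2, ≤, R1, …, Rr}, let S be a nonempty training set, and let ℓ ∈ ℕ. If there exist a quantifier-free formula φ(x; y1, …, yℓ) ∈ Φ_σ[1+ℓ] and parameters v̄ ∈ V(T)^ℓ such that the hypothesis ⟦φ(x; v̄)⟧^T is consistent with S, then there exist a quantifier-free formula φ'(x; y1, …, yℓ) ∈ Φ_σ[1+ℓ] and parameters w̄ ∈ (N_suff)^ℓ such that ⟦φ'(x; w̄)⟧^T is consistent with S. (That is, N_suff is 1-sufficient for S on binary trees.) -/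
/-! Each parameter `v` is replaced, independently of the others, by a node `z` of `N_suff` such
that every atomic relation between an example `x` and `v` is a Boolean combination of atomic
relations between `x` and `z` (`exists_simulating`). If `v` lies in `N_suff`, take `z = v`.
Otherwise `v` is neither equal nor adjacent to any example, so only the ancestor relation matters:

* if some example lies below `v`, let `z` be the shallowest node of the LCA-closure below `v`.
  By closure under LCAs, an example is below `v` iff it is below `z`, and it is above `v` iff it
  is a strict ancestor of `z`;
* if no example lies below `v`, let `z` be the deepest example above `v`, so that an example is
  above `v` iff it is above `z`; if there is no such example, any example serves as `z`.

Atoms not mentioning the example variable have a fixed truth value, and atoms mentioning only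
that variable are kept, so an induction on quantifier-free formulas (`qfDef_of_isQF`) produces
the formula over the new parameters. -/

open FirstOrder Language

/-- Number of relation symbols of each arity in the signature
`σ = {E1, E2, ≤, R1, …, Rr}`: `r` unary label relations and three binary relations. -/
abbrev binNumRels (r n : ℕ) : ℕ :=
  match n with
  | 1 => r
  | 2 => 3
  | _ => 0

/-- The relational signature `σ = {E1, E2, ≤, R1, …, Rr}` of labeled binary trees. -/
abbrev BinSig (r : ℕ) : Language :=
  ⟨fun _ => Empty, fun n => Fin (binNumRels r n)⟩

/-- A labeled binary tree: a finite, prefix-closed set of node positions (lists of booleans;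
`false` = first child direction, `true` = second child direction), together with `r` unary
label relations. -/
structure LBTree (r : ℕ) where
  verts : Finset (List Bool)
  prefix_closed : ∀ {u v : List Bool}, u ∈ verts → v <+: u → v ∈ verts
  label : Fin r → List Bool → Prop

/-- The node set `V(T)` of a labeled binary tree. -/
def LBTree.V {r : ℕ} (T : LBTree r) : Type := {u : List Bool // u ∈ T.verts}

/-- Interpretation of the signature on the nodes of a labeled binary tree: `E1` (relation `0`)
is the first-child relation, `E2` (relation `1`) is the second-child relation, and `≤`
(relation `2`) is the reflexive ancestor relation. -/
instance LBTree.structure {r : ℕ} (T : LBTree r) : (BinSig r).Structure T.V where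
  funMap := fun {_} f _ => f.elim
  RelMap := fun {n} =>
    match n with
    | 1 => fun i x => T.label i (x 0).1
    | 2 => fun j x =>
        if j = (0 : Fin 3) then (x 1).1 = (x 0).1 ++ [false]
        else if j = (1 : Fin 3) then (x 1).1 = (x 0).1 ++ [true]
        else (x 0).1 <+: (x 1).1
    | 0 => fun j _ => j.elim0
    | _ + 3 => fun j _ => j.elim0

/-- Longest common prefix of two positions: the lowest common ancestor in a tree of positions. -/
def lcp : List Bool → List Bool → List Bool
  | [], _ => []
  | _, [] => []
  | a :: u, b :: v => if a = b then a :: lcp u v else []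

/-- The closure of a set of positions under lowest common ancestors. -/
def lcaClosure (A : Set (List Bool)) : Set (List Bool) :=
  ⋂₀ {B | A ⊆ B ∧ ∀ u ∈ B, ∀ v ∈ B, lcp u v ∈ B}

/-- Two nodes of a binary tree are adjacent if one is a (first or second) child of the other. -/
def LBTree.adj {r : ℕ} (T : LBTree r) (u v : T.V) : Prop :=
  (∃ b, v.1 = u.1 ++ [b]) ∨ (∃ b, u.1 = v.1 ++ [b])

/-- Tree distance at most two. -/
def LBTree.distLE2 {r : ℕ} (T : LBTree r) (u v : T.V) : Prop :=
  u = v ∨ T.adj u v ∨ ∃ m, T.adj u m ∧ T.adj m v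

/-- `N_suff`: the 2-neighborhood (all nodes at tree-distance at most 2) of the closure of the
set of example nodes of the training set `S` under lowest common ancestors. -/
def NSuff {r : ℕ} (T : LBTree r) (S : Finset (T.V × Bool)) : Set T.V :=
  {w | ∃ z : T.V, z.1 ∈ lcaClosure (Subtype.val '' {u : T.V | ∃ c, (u, c) ∈ S}) ∧ T.distLE2 z w}

namespace NSuffAux

/-! ### Longest common prefixes and the LCA-closure -/

lemma lcp_prefix_left : ∀ u v : List Bool, lcp u v <+: u
  | [], _ => by simp [lcp]
  | _ :: _, [] => by simp [lcp]
  | a :: u, b :: v => by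
      by_cases h : a = b
      · simpa [lcp, h, List.cons_prefix_cons] using lcp_prefix_left u v
      · simp [lcp, h]

lemma lcp_prefix_right : ∀ u v : List Bool, lcp u v <+: v
  | [], _ => by simp [lcp]
  | _ :: _, [] => by simp [lcp]
  | a :: u, b :: v => by
      by_cases h : a = b
      · simpa [lcp, h, List.cons_prefix_cons] using lcp_prefix_right u v
      · simp [lcp, h]

lemma prefix_lcp : ∀ p u v : List Bool, p <+: u → p <+: v → p <+: lcp u v
  | [], _, _, _, _ => List.nil_prefix
  | c :: p, [], _, h, _ => by simp at h
  | c :: p, _ :: _, [], _, h => by simp at h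
  | c :: p, a :: u, b :: v, hu, hv => by
      rw [List.cons_prefix_cons] at hu hv
      obtain ⟨rfl, hu⟩ := hu
      obtain ⟨rfl, hv⟩ := hv
      simpa [lcp, List.cons_prefix_cons] using prefix_lcp p u v hu hv

lemma subset_lcaClosure {A : Set (List Bool)} : A ⊆ lcaClosure A :=
  fun _ hx _ hB => hB.1 hx

lemma lcp_mem_lcaClosure {A : Set (List Bool)} {u v : List Bool}
    (hu : u ∈ lcaClosure A) (hv : v ∈ lcaClosure A) : lcp u v ∈ lcaClosure A :=
  fun B hB => hB.2 u (hu B hB) v (hv B hB)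

/-- If some element of `A` lies below `v`, then the elements of `A` below `v` are exactly those
below a single node `z` of the LCA-closure, namely the shallowest element of the closure
below `v`. -/
lemma exists_lca_below {A : Set (List Bool)} {v : List Bool} (h : ∃ x ∈ A, v <+: x) :
    ∃ z ∈ lcaClosure A, v <+: z ∧ ∀ x ∈ A, v <+: x → z <+: x := by
  classical
  obtain ⟨x₀, hx₀, hvx₀⟩ := h
  have hex : ∃ n, ∃ z ∈ lcaClosure A, v <+: z ∧ z.length = n :=
    ⟨_, x₀, subset_lcaClosure hx₀, hvx₀, rfl⟩
  obtain ⟨z, hz, hvz, hlen⟩ := Nat.find_spec hex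
  refine ⟨z, hz, hvz, fun x hx hvx => ?_⟩
  have hmin : z.length ≤ (lcp z x).length := hlen ▸ Nat.find_min' hex
    ⟨lcp z x, lcp_mem_lcaClosure hz (subset_lcaClosure hx), prefix_lcp _ _ _ hvz hvx, rfl⟩
  have heq : lcp z x = z := (lcp_prefix_left z x).eq_of_length_le hmin
  exact heq ▸ lcp_prefix_right z x

/-! ### Quantifier-free definability on a set of nodes -/

variable {r ℓ : ℕ} {T : LBTree r}

/-- The predicate `P` agrees on the set `A` of nodes with a quantifier-free formula with
parameters `w`. -/
def QFDef (A : Set T.V) (w : Fin ℓ → T.V) (P : T.V → Prop) : Prop :=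
  ∃ ψ : (BinSig r).Formula (Fin (ℓ + 1)), ψ.IsQF ∧
    ∀ x ∈ A, (ψ.Realize (Fin.cons x w) ↔ P x)

namespace QFDef

variable {A : Set T.V} {w : Fin ℓ → T.V} {P Q : T.V → Prop}

lemma congr (h : QFDef A w P) (hPQ : ∀ x ∈ A, (P x ↔ Q x)) : QFDef A w Q := by
  obtain ⟨ψ, hψ, h⟩ := h
  exact ⟨ψ, hψ, fun x hx => (h x hx).trans (hPQ x hx)⟩

lemma imp (hP : QFDef A w P) (hQ : QFDef A w Q) : QFDef A w (fun x => P x → Q x) := by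
  obtain ⟨ψ, hψ, h⟩ := hP
  obtain ⟨χ, hχ, h'⟩ := hQ
  exact ⟨ψ.imp χ, hψ.imp hχ, fun x hx => by
    rw [Formula.realize_imp, h x hx, h' x hx]⟩

lemma const (p : Prop) : QFDef A w (fun _ => p) := by
  by_cases hp : p
  · exact ⟨⊤, BoundedFormula.IsQF.top, fun x _ => by simp [hp]⟩
  · exact ⟨⊥, BoundedFormula.IsQF.falsum, fun x _ => by simp [hp]⟩

lemma not (hP : QFDef A w P) : QFDef A w (fun x => ¬ P x) := hP.imp (const False)

lemma and (hP : QFDef A w P) (hQ : QFDef A w Q) : QFDef A w (fun x => P x ∧ Q x) :=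
  (hP.imp hQ.not).not.congr fun x _ => by tauto

lemma eq (a b : Fin (ℓ + 1)) :
    QFDef A w (fun x => (Fin.cons x w : Fin (ℓ + 1) → T.V) a =
      (Fin.cons x w : Fin (ℓ + 1) → T.V) b) :=
  ⟨Term.equal (Term.var a) (Term.var b), (BoundedFormula.IsAtomic.equal _ _).isQF,
    fun x _ => by simp [Formula.realize_equal]⟩

lemma rel {n : ℕ} (R : (BinSig r).Relations n) (a : Fin n → Fin (ℓ + 1)) :
    QFDef A w (fun x => Structure.RelMap R
      (fun k => (Fin.cons x w : Fin (ℓ + 1) → T.V) (a k))) :=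
  ⟨R.formula fun k => Term.var (a k), (BoundedFormula.IsAtomic.rel _ _).isQF,
    fun x _ => by simp [Formula.realize_rel]⟩

end QFDef

/-! ### Replacing a parameter -/

/-- Every binary atomic relation between the running node and the parameter `v` (in either
order) is definable on `A` from the parameters `w`. -/
def Simulates (A : Set T.V) (w : Fin ℓ → T.V) (v : T.V) : Prop :=
  (QFDef A w fun x => x = v) ∧
  ∀ R : (BinSig r).Relations 2,
    (QFDef A w fun x => Structure.RelMap R ![x, v]) ∧
    (QFDef A w fun x => Structure.RelMap R ![v, x])

lemma simulates_self (A : Set T.V) (w : Fin ℓ → T.V) (i : Fin ℓ) : Simulates A w (w i) := by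
  refine ⟨(QFDef.eq 0 i.succ).congr fun x _ => by simp, fun R => ⟨?_, ?_⟩⟩
  · refine (QFDef.rel R ![0, i.succ]).congr fun x _ => ?_
    rw [show (fun k => (Fin.cons x w : Fin (ℓ + 1) → T.V) (![0, i.succ] k)) = ![x, w i] by
      funext k; fin_cases k <;> rfl]
  · refine (QFDef.rel R ![i.succ, 0]).congr fun x _ => ?_
    rw [show (fun k => (Fin.cons x w : Fin (ℓ + 1) → T.V) (![i.succ, 0] k)) = ![w i, x] by
      funext k; fin_cases k <;> rfl]

/-- If `v` is neither equal nor adjacent to any node of `A`, only the ancestor relation to `v`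
carries information. -/
lemma simulates_of_far {A : Set T.V} {w : Fin ℓ → T.V} {v : T.V}
    (hne : ∀ x ∈ A, x ≠ v) (hadj : ∀ x ∈ A, ¬ T.adj x v)
    (h1 : QFDef A w fun x => x.1 <+: v.1) (h2 : QFDef A w fun x => v.1 <+: x.1) :
    Simulates A w v := by
  refine ⟨(QFDef.const False).congr fun x hx => by simpa using hne x hx, fun R => ?_⟩
  have hc : ∀ x ∈ A, ∀ b, v.1 ≠ x.1 ++ [b] := fun x hx b hb => hadj x hx (Or.inl ⟨b, hb⟩)
  have hp : ∀ x ∈ A, ∀ b, x.1 ≠ v.1 ++ [b] := fun x hx b hb => hadj x hx (Or.inr ⟨b, hb⟩)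
  change Fin 3 at R
  fin_cases R
  · exact ⟨(QFDef.const False).congr fun x hx => iff_of_false id (hc x hx false),
      (QFDef.const False).congr fun x hx => iff_of_false id (hp x hx false)⟩
  · exact ⟨(QFDef.const False).congr fun x hx => iff_of_false id (hc x hx true),
      (QFDef.const False).congr fun x hx => iff_of_false id (hp x hx true)⟩
  · exact ⟨h1, h2⟩

/-- A parameter `v` can be replaced by a single node `u` of `N_suff`, at whatever index `u`
occurs among the new parameters. -/
lemma exists_simulating (S : Finset (T.V × Bool)) (hS : S.Nonempty) (v : T.V) :
    ∃ u ∈ NSuff T S, ∀ (w : Fin ℓ → T.V) (i : Fin ℓ), w i = u →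
      Simulates {x : T.V | ∃ c, (x, c) ∈ S} w v := by
  classical
  by_cases hv : v ∈ NSuff T S
  · exact ⟨v, hv, fun w i hi => hi ▸ simulates_self _ w i⟩
  set A : Set T.V := {x : T.V | ∃ c, (x, c) ∈ S} with hA
  have hAC : ∀ x ∈ A, x.1 ∈ lcaClosure (Subtype.val '' A) :=
    fun x hx => subset_lcaClosure ⟨x, hx, rfl⟩
  have hne : ∀ x ∈ A, x ≠ v := fun x hx h => hv ⟨x, hAC x hx, Or.inl h⟩
  have hadj : ∀ x ∈ A, ¬ T.adj x v := fun x hx h => hv ⟨x, hAC x hx, Or.inr (Or.inl h)⟩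
  have hle : ∀ (w : Fin ℓ → T.V) (i : Fin ℓ), (QFDef A w fun x => x.1 <+: (w i).1) :=
    fun w i => ((simulates_self A w i).2 (2 : Fin 3)).1
  have hge : ∀ (w : Fin ℓ → T.V) (i : Fin ℓ), (QFDef A w fun x => (w i).1 <+: x.1) :=
    fun w i => ((simulates_self A w i).2 (2 : Fin 3)).2
  by_cases hbelow : ∃ x ∈ A, v.1 <+: x.1
  · obtain ⟨x₀, hx₀, hvx₀⟩ := hbelow
    obtain ⟨z, hz, hvz, hzx⟩ := exists_lca_below (A := Subtype.val '' A) (v := v.1)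
      ⟨x₀.1, ⟨x₀, hx₀, rfl⟩, hvx₀⟩
    have hzx' : ∀ x ∈ A, v.1 <+: x.1 → z <+: x.1 := fun x hx => hzx x.1 ⟨x, hx, rfl⟩
    refine ⟨⟨z, T.prefix_closed x₀.2 (hzx' x₀ hx₀ hvx₀)⟩,
      ⟨⟨z, T.prefix_closed x₀.2 (hzx' x₀ hx₀ hvx₀)⟩, hz, Or.inl rfl⟩, ?_⟩
    intro w i hi
    have hwi : (w i).1 = z := congrArg Subtype.val hi
    refine simulates_of_far hne hadj ?_ ?_
    -- A strict ancestor of `z` in `A` cannot lie below `v`, so it lies above `v`.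
    · refine ((hle w i).and (hge w i).not).congr fun x hx => ?_
      rw [hwi]
      constructor
      · rintro ⟨hxz, hzx⟩
        exact (List.prefix_or_prefix_of_prefix hxz hvz).resolve_right
          fun h => hzx (hzx' x hx h)
      · intro hxv
        refine ⟨hxv.trans hvz, fun h => hne x hx (Subtype.ext ?_)⟩
        exact hxv.eq_of_length_le (hvz.trans h).length_le
    · refine (hge w i).congr fun x hx => ?_
      rw [hwi]
      exact ⟨fun h => hvz.trans h, hzx' x hx⟩
  · have hge0 : ∀ w : Fin ℓ → T.V, QFDef A w fun x => v.1 <+: x.1 := fun w =>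
      (QFDef.const False).congr fun x hx => iff_of_false id fun h => hbelow ⟨x, hx, h⟩
    by_cases habove : ∃ p ∈ S, p.1.1 <+: v.1
    · obtain ⟨p, hp, hmax⟩ := (S.filter fun p => p.1.1 <+: v.1).exists_max_image
        (fun p => p.1.1.length) (by simpa [Finset.Nonempty] using habove)
      rw [Finset.mem_filter] at hp
      refine ⟨p.1, ⟨p.1, hAC _ ⟨p.2, hp.1⟩, Or.inl rfl⟩, fun w i hi => ?_⟩
      refine simulates_of_far hne hadj ((hle w i).congr fun x hx => ?_) (hge0 w)
      rw [hi]
      refine ⟨fun h => h.trans hp.2, fun h => ?_⟩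
      obtain ⟨c, hc⟩ := hx
      exact List.prefix_of_prefix_length_le h hp.2
        (hmax (x, c) (Finset.mem_filter.2 ⟨hc, h⟩))
    · obtain ⟨p, hp⟩ := hS
      refine ⟨p.1, ⟨p.1, hAC _ ⟨p.2, hp⟩, Or.inl rfl⟩, fun w i _ => ?_⟩
      refine simulates_of_far hne hadj ((QFDef.const False).congr fun x hx => ?_) (hge0 w)
      obtain ⟨c, hc⟩ := hx
      exact iff_of_false id fun h => habove ⟨_, hc, h⟩

/-! ### Translating quantifier-free formulas -/

/-- Since the signature is relational, every term is a variable. -/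
lemma term_eq_var (t : (BinSig r).Term (Fin (ℓ + 1) ⊕ Fin 0)) :
    ∃ a : Fin (ℓ + 1), t = Term.var (Sum.inl a) := by
  rcases t with (a | a) | ⟨f, _⟩
  · exact ⟨a, rfl⟩
  · exact a.elim0
  · exact f.elim

/-- Relational atoms with parameters `v` translate to quantifier-free formulas with
parameters `w`; atoms not mentioning the running node become constants. -/
lemma qfDef_rel {A : Set T.V} {w v : Fin ℓ → T.V} (h : ∀ i, Simulates A w (v i)) {n : ℕ}
    (R : (BinSig r).Relations n) (a : Fin n → Fin (ℓ + 1)) :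
    QFDef A w (fun x => Structure.RelMap R
      (fun k => (Fin.cons x v : Fin (ℓ + 1) → T.V) (a k))) := by
  match n, R, a with
  | 0, R, _ => exact Fin.elim0 R
  | n + 3, R, _ => exact Fin.elim0 R
  | 1, R, a =>
    have e : ∀ x, (fun k => (Fin.cons x v : Fin (ℓ + 1) → T.V) (a k)) =
        ![(Fin.cons x v : Fin (ℓ + 1) → T.V) (a 0)] := fun x => by
      funext k; fin_cases k; rfl
    simp only [e]
    cases a 0 using Fin.cases with
    | zero =>
      refine (QFDef.rel R ![0]).congr fun x _ => ?_
      rw [show (fun k => (Fin.cons x w : Fin (ℓ + 1) → T.V) (![0] k)) = ![x] by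
        funext k; fin_cases k; rfl]
      rfl
    | succ i => exact (QFDef.const (Structure.RelMap R ![v i])).congr fun _ _ => Iff.rfl
  | 2, R, a =>
    have e : ∀ x, (fun k => (Fin.cons x v : Fin (ℓ + 1) → T.V) (a k)) =
        ![(Fin.cons x v : Fin (ℓ + 1) → T.V) (a 0),
          (Fin.cons x v : Fin (ℓ + 1) → T.V) (a 1)] := fun x => by
      funext k; fin_cases k <;> rfl
    simp only [e]
    cases a 0 using Fin.cases with
    | zero =>
      cases a 1 using Fin.cases with
      | zero =>
        refine (QFDef.rel R ![0, 0]).congr fun x _ => ?_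
        rw [show (fun k => (Fin.cons x w : Fin (ℓ + 1) → T.V) (![0, 0] k)) = ![x, x] by
          funext k; fin_cases k <;> rfl]
        rfl
      | succ j => exact ((h j).2 R).1
    | succ i =>
      cases a 1 using Fin.cases with
      | zero => exact ((h i).2 R).2
      | succ j => exact (QFDef.const (Structure.RelMap R ![v i, v j])).congr fun _ _ => Iff.rfl

lemma qfDef_eq {A : Set T.V} {w v : Fin ℓ → T.V} (h : ∀ i, Simulates A w (v i))
    (a b : Fin (ℓ + 1)) :
    QFDef A w (fun x => (Fin.cons x v : Fin (ℓ + 1) → T.V) a =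
      (Fin.cons x v : Fin (ℓ + 1) → T.V) b) := by
  cases a using Fin.cases with
  | zero =>
    cases b using Fin.cases with
    | zero => exact (QFDef.const True).congr fun x _ => by simp
    | succ j => exact (h j).1
  | succ i =>
    cases b using Fin.cases with
    | zero => exact (h i).1.congr fun x _ => eq_comm
    | succ j => exact (QFDef.const (v i = v j)).congr fun _ _ => Iff.rfl

lemma qfDef_of_isQF {A : Set T.V} {w v : Fin ℓ → T.V} (h : ∀ i, Simulates A w (v i))
    {φ : (BinSig r).Formula (Fin (ℓ + 1))} (hφ : φ.IsQF) :
    QFDef A w (fun x => φ.Realize (Fin.cons x v)) := by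
  induction hφ with
  | falsum => exact QFDef.const False
  | of_isAtomic hat =>
    cases hat with
    | equal t₁ t₂ =>
      obtain ⟨a, rfl⟩ := term_eq_var t₁
      obtain ⟨b, rfl⟩ := term_eq_var t₂
      exact qfDef_eq h a b
    | rel R ts =>
      choose a ha using fun k => term_eq_var (ts k)
      obtain rfl : ts = fun k => Term.var (Sum.inl (a k)) := funext ha
      exact qfDef_rel h R a
  | imp _ _ h₁ h₂ => exact h₁.imp h₂

end NSuffAux

open NSuffAux in
/-- If some quantifier-free formula `φ(x; y₁,…,y_ℓ)` over the signature of
labeled binary trees together with parameters `v̄ ∈ V(T)^ℓ` yields a hypothesis consistent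
with the nonempty training set `S`, then some quantifier-free formula `φ'(x; y₁,…,y_ℓ)` with
parameters taken from `N_suff` yields a hypothesis consistent with `S`
(`N_suff` is 1-sufficient for `S` on binary trees). -/
theorem nsuff_one_sufficient_binary (r ℓ : ℕ) (T : LBTree r)
    (S : Finset (T.V × Bool)) (hSne : S.Nonempty)
    (hScons : ∀ u : T.V, ¬ ((u, true) ∈ S ∧ (u, false) ∈ S))
    (φ : (BinSig r).Formula (Fin (ℓ + 1))) (hφ : φ.IsQF) (v : Fin ℓ → T.V)
    (hcons : ∀ p ∈ S, (φ.Realize (Fin.cons p.1 v) ↔ p.2 = true)) :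
    ∃ φ' : (BinSig r).Formula (Fin (ℓ + 1)), φ'.IsQF ∧
      ∃ w : Fin ℓ → T.V, (∀ i, w i ∈ NSuff T S) ∧
        ∀ p ∈ S, (φ'.Realize (Fin.cons p.1 w) ↔ p.2 = true) := by
  choose w hw hsim using fun i => exists_simulating (ℓ := ℓ) S hSne (v i)
  obtain ⟨φ', hφ', h⟩ := qfDef_of_isQF (fun i => hsim i w i rfl) hφ
  exact ⟨φ', hφ', w, hw, fun p hp => (h p.1 ⟨p.2, hp⟩).trans (hcons p hp)⟩
end

section
/- Let T be a labeled binary tree over the signature σ = {E1, E2, ≤, R1, …, Rr}, let S be a nonempty training set, let φ(x; y1, …, yℓ) ∈ Φ_σ[1+ℓ] be quantifier-free, and let v̄ ∈ V(T)^ℓ be such that ⟦φ(x; v̄)⟧^T is consistent with S. Then for every index i ∈ {1, …, ℓ} there exist a node w ∈ N_suff and a quantifier-free formula φ' ∈ Φ_σ[1+ℓ] such that ⟦φ'(x; v1, …, v(i−1), w, v(i+1), …, vℓ)⟧^T is consistent with S. -/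
/-!
Write `A` for the set of example nodes. If the parameter `v i` already lies in `N_suff`, nothing
has to change. Otherwise no node of `A` is equal or adjacent to `v i`, so a node `x` of `A` is only
seen by `v i` through the two predicates `x ≤ v i` and `v i ≤ x`. It suffices to find a node `w` of
the LCA-closure of `A` over which both predicates, restricted to `A`, are quantifier-free definable:

* if some closure node lies below `v i`, take `w` to be a shallowest one; closure under lowest
  common ancestors makes `w` lie above every node of `A` below `v i`, so on `A` the predicates
  become `x < w` and `w ≤ x` (`exists_below`);
* otherwise, if some node of `A` lies above `v i`, take the deepest such node as `w`; on `A` the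
  predicates become `x ≤ w` and `⊥` (`exists_above`);
* otherwise both predicates are identically false on `A`, and any `w` in `A` works.

The formula is then rewritten atom by atom (`QFDef.of_isQF`): atoms without `x` are constants on
`A`, atoms without `y_i` are kept, and atoms relating `x` and `y_i` are the ones discussed above.
-/


open FirstOrder Language

/-! ### Replacing a position by one in the LCA-closure -/

theorem lcp_prefix_left : ∀ u v : List Bool, lcp u v <+: u
  | [], _ => by simp [lcp]
  | _ :: _, [] => by simp [lcp]
  | a :: u, b :: v => by
    by_cases h : a = b
    · simpa [lcp, h, List.cons_prefix_cons] using lcp_prefix_left u v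
    · simp [lcp, h]

theorem lcp_prefix_right : ∀ u v : List Bool, lcp u v <+: v
  | [], _ => by simp [lcp]
  | _ :: _, [] => by simp [lcp]
  | a :: u, b :: v => by
    by_cases h : a = b
    · simpa [lcp, h, List.cons_prefix_cons] using lcp_prefix_right u v
    · simp [lcp, h]

theorem prefix_lcp : ∀ {t u v : List Bool}, t <+: u → t <+: v → t <+: lcp u v
  | [], _, _, _, _ => by simp
  | c :: t, [], _, h, _ => by simp at h
  | c :: t, _ :: _, [], _, h => by simp at h
  | c :: t, a :: u, b :: v, h, h' => by
    rw [List.cons_prefix_cons] at h h'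
    obtain ⟨rfl, h⟩ := h
    obtain ⟨rfl, h'⟩ := h'
    simpa [lcp, List.cons_prefix_cons] using prefix_lcp h h'

theorem prefix_total {a b c : List Bool} (ha : a <+: c) (hb : b <+: c) : a <+: b ∨ b <+: a :=
  (le_total a.length b.length).imp (List.prefix_of_prefix_length_le ha hb)
    (List.prefix_of_prefix_length_le hb ha)

theorem subset_lcaClosure (A : Set (List Bool)) : A ⊆ lcaClosure A :=
  fun _ hx _ hB => hB.1 hx

theorem lcp_mem_lcaClosure {A : Set (List Bool)} {u v : List Bool}
    (hu : u ∈ lcaClosure A) (hv : v ∈ lcaClosure A) : lcp u v ∈ lcaClosure A :=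
  fun B hB => hB.2 u (hu B hB) v (hv B hB)

/-- A position `v` outside the closure of `A` with a closure node below it can be replaced by the
shallowest closure node `w` below it. -/
theorem exists_below {A : Set (List Bool)} {v : List Bool} (hv : v ∉ lcaClosure A)
    (h : ∃ z ∈ lcaClosure A, v <+: z) :
    ∃ w ∈ lcaClosure A, ∀ x ∈ A,
      (v <+: x ↔ w <+: x) ∧ (x <+: v ↔ x <+: w ∧ ¬ w <+: x) := by
  obtain ⟨w, ⟨hw, hvw⟩, hmin⟩ := exists_minimalFor_of_wellFoundedLT
    (fun z => z ∈ lcaClosure A ∧ v <+: z) List.length h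
  have key : ∀ x ∈ A, v <+: x → w <+: x := by
    intro x hx hvx
    have hmem := lcp_mem_lcaClosure hw (subset_lcaClosure A hx)
    have hlen := hmin ⟨hmem, prefix_lcp hvw hvx⟩ (lcp_prefix_left w x).length_le
    have := (lcp_prefix_left w x).eq_of_length_le hlen
    rw [← this]
    exact lcp_prefix_right w x
  refine ⟨w, hw, fun x hx => ⟨⟨key x hx, hvw.trans⟩, ⟨fun hxv => ⟨hxv.trans hvw, fun hwx => ?_⟩,
    fun ⟨hxw, hwx⟩ => ?_⟩⟩⟩
  · have : v = x :=
      (hvw.trans hwx).eq_of_length_le hxv.length_le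
    exact hv (this ▸ subset_lcaClosure A hx)
  · rcases prefix_total hxw hvw with h | h
    · exact h
    · exact absurd (key x hx h) hwx

/-- A position `v` with some node of `A` above it can be replaced, as far as nodes of `A` above it
are concerned, by the deepest such node. -/
theorem exists_above {A : Set (List Bool)} {v : List Bool} (h : ∃ z ∈ A, z <+: v) :
    ∃ w ∈ A, ∀ x ∈ A, (x <+: v ↔ x <+: w) := by
  -- The codepth `v.length - z.length` is minimized; subtraction does not truncate on prefixes.
  obtain ⟨w, ⟨hw, hwv⟩, hmin⟩ := exists_minimalFor_of_wellFoundedLT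
    (fun z => z ∈ A ∧ z <+: v) (fun z => v.length - z.length) h
  refine ⟨w, hw, fun x hx => ⟨fun hxv => ?_, fun hxw => hxw.trans hwv⟩⟩
  rcases prefix_total hxv hwv with h | h
  · exact h
  · have h1 := h.length_le
    have h2 := hxv.length_le
    have h3 := hmin ⟨hx, hxv⟩ (by dsimp only; omega)
    dsimp only at h3
    rw [h.eq_of_length_le (by omega)]

/-! ### Quantifier-free definability on a set of nodes -/

section QFDef

variable {r ℓ : ℕ} {T : LBTree r}

/-- `QFDef X u P`: on the set `X` of nodes, the predicate `P` is defined by a quantifier-free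
formula with parameters `u`. -/
def QFDef (X : Set T.V) (u : Fin ℓ → T.V) (P : T.V → Prop) : Prop :=
  ∃ ψ : (BinSig r).Formula (Fin (ℓ + 1)), ψ.IsQF ∧
    ∀ x ∈ X, (ψ.Realize (Fin.cons x u) ↔ P x)

variable {X : Set T.V} {u : Fin ℓ → T.V} {P Q : T.V → Prop}

theorem QFDef.congr (h : QFDef X u P) (hPQ : ∀ x ∈ X, (P x ↔ Q x)) : QFDef X u Q := by
  obtain ⟨ψ, hψ, h⟩ := h
  exact ⟨ψ, hψ, fun x hx => (h x hx).trans (hPQ x hx)⟩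

theorem QFDef.bot : QFDef X u (fun _ => False) :=
  ⟨⊥, BoundedFormula.IsQF.falsum, fun _ _ => by simp⟩

theorem QFDef.imp (hP : QFDef X u P) (hQ : QFDef X u Q) : QFDef X u (fun x => P x → Q x) := by
  obtain ⟨ψ, hψ, h⟩ := hP
  obtain ⟨χ, hχ, h'⟩ := hQ
  exact ⟨ψ.imp χ, hψ.imp hχ, fun x hx => by rw [Formula.realize_imp, h x hx, h' x hx]⟩

theorem QFDef.not (hP : QFDef X u P) : QFDef X u (fun x => ¬ P x) := hP.imp .bot

theorem QFDef.and (hP : QFDef X u P) (hQ : QFDef X u Q) : QFDef X u (fun x => P x ∧ Q x) :=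
  (hP.imp hQ.not).not.congr fun _ _ => by tauto

theorem QFDef.const (p : Prop) : QFDef X u (fun _ => p) := by
  by_cases hp : p
  · exact QFDef.bot.not.congr fun _ _ => by simp [hp]
  · exact QFDef.bot.congr fun _ _ => by simp [hp]

theorem QFDef.rel {n : ℕ} (R : (BinSig r).Relations n) (s : Fin n → Fin (ℓ + 1)) :
    QFDef X u (fun x => Structure.RelMap R
      (fun k => (Fin.cons x u : Fin (ℓ + 1) → T.V) (s k))) :=
  ⟨R.formula fun k => Term.var (s k), (BoundedFormula.IsAtomic.rel _ _).isQF,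
    fun x _ => by rw [Formula.realize_rel]; rfl⟩

theorem QFDef.eq (s t : Fin (ℓ + 1)) :
    QFDef X u (fun x => (Fin.cons x u : Fin (ℓ + 1) → T.V) s =
      (Fin.cons x u : Fin (ℓ + 1) → T.V) t) :=
  ⟨Term.equal (Term.var s) (Term.var t), (BoundedFormula.IsAtomic.equal _ _).isQF,
    fun x _ => by rw [Formula.realize_equal]; rfl⟩

theorem QFDef.le_param (i : Fin ℓ) : QFDef X u (fun x => x.1 <+: (u i).1) :=
  (QFDef.rel (n := 2) (2 : Fin 3) ![0, i.succ]).congr fun x _ => by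
    simp [Structure.RelMap]

theorem QFDef.param_le (i : Fin ℓ) : QFDef X u (fun x => (u i).1 <+: x.1) :=
  (QFDef.rel (n := 2) (2 : Fin 3) ![i.succ, 0]).congr fun x _ => by
    simp [Structure.RelMap]

/-- Every term of the relational signature is a variable. -/
theorem exists_var (t : (BinSig r).Term (Fin (ℓ + 1) ⊕ Fin 0)) :
    ∃ k, t = Term.var (Sum.inl k) := by
  rcases t with (k | k) | ⟨f, _⟩
  · exact ⟨k, rfl⟩
  · exact k.elim0
  · exact f.elim

/-- Suppose that no node of `X` is equal or adjacent to the parameter `v i`. If the two order atoms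
relating `x` and `v i` are definable on `X` after replacing `v i` by `w`, then so is every
quantifier-free formula. -/
theorem QFDef.of_isQF {v : Fin ℓ → T.V} {i : Fin ℓ} {w : T.V}
    (hne : ∀ x ∈ X, x ≠ v i)
    (hadj : ∀ x ∈ X, ¬ T.adj x (v i))
    (hle : QFDef X (Function.update v i w) (fun x => x.1 <+: (v i).1))
    (hge : QFDef X (Function.update v i w) (fun x => (v i).1 <+: x.1))
    {φ : (BinSig r).Formula (Fin (ℓ + 1))} (hφ : φ.IsQF) :
    QFDef X (Function.update v i w) (fun x => φ.Realize (Fin.cons x v)) := by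
  -- The two environments agree away from the variable `y_i`.
  have agree : ∀ (x : T.V) (s : Fin (ℓ + 1)), s ≠ i.succ →
      (Fin.cons x (Function.update v i w) : Fin (ℓ + 1) → T.V) s =
        (Fin.cons x v : Fin (ℓ + 1) → T.V) s := by
    intro x s
    refine Fin.cases (fun _ => rfl) (fun j hj => ?_) s
    have : j ≠ i := fun h => hj (by rw [h])
    simp [this]
  have const : ∀ (x y : T.V) (s : Fin (ℓ + 1)), s ≠ 0 →
      (Fin.cons x v : Fin (ℓ + 1) → T.V) s = (Fin.cons y v : Fin (ℓ + 1) → T.V) s := by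
    intro x y s
    exact Fin.cases (fun h => absurd rfl h) (fun j _ => rfl) s
  rcases X.eq_empty_or_nonempty with rfl | ⟨x₀, _⟩
  · exact QFDef.bot.congr fun _ h => h.elim
  induction hφ with
  | falsum => exact QFDef.bot
  | imp _ _ h1 h2 => exact h1.imp h2
  | of_isAtomic hat =>
    cases hat with
    | equal t₁ t₂ =>
      obtain ⟨s, rfl⟩ := exists_var t₁
      obtain ⟨t, rfl⟩ := exists_var t₂
      suffices h : QFDef X (Function.update v i w) (fun x =>
          (Fin.cons x v : Fin (ℓ + 1) → T.V) s = (Fin.cons x v : Fin (ℓ + 1) → T.V) t) from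
        h.congr fun x _ => Iff.rfl
      by_cases hi : s ≠ i.succ ∧ t ≠ i.succ
      · exact (QFDef.eq s t).congr fun x _ => by rw [agree x s hi.1, agree x t hi.2]
      by_cases h0 : s ≠ 0 ∧ t ≠ 0
      · exact (QFDef.const ((Fin.cons x₀ v : Fin (ℓ + 1) → T.V) s =
          (Fin.cons x₀ v : Fin (ℓ + 1) → T.V) t)).congr fun x _ => by
            rw [const x x₀ s h0.1, const x x₀ t h0.2]
      have hi0 : i.succ ≠ 0 := Fin.succ_ne_zero i
      obtain ⟨rfl, rfl⟩ | ⟨rfl, rfl⟩ : (s = 0 ∧ t = i.succ) ∨ (s = i.succ ∧ t = 0) := by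
        grind
      · exact QFDef.bot.congr fun x hx => by simpa using hne x hx
      · exact QFDef.bot.congr fun x hx => by simpa using (hne x hx).symm
    | @rel n R ts =>
      choose s hs using fun k => exists_var (ts k)
      obtain rfl : ts = fun k => Term.var (Sum.inl (s k)) := funext hs
      suffices h : QFDef X (Function.update v i w) (fun x => Structure.RelMap R
          (fun k => (Fin.cons x v : Fin (ℓ + 1) → T.V) (s k))) from
        h.congr fun x _ => Iff.rfl
      by_cases hi : ∀ k, s k ≠ i.succ
      · exact (QFDef.rel R s).congr fun x _ => by simp only [agree x _ (hi _)]
      by_cases h0 : ∀ k, s k ≠ 0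
      · exact (QFDef.const (Structure.RelMap R
          (fun k => (Fin.cons x₀ v : Fin (ℓ + 1) → T.V) (s k)))).congr fun x _ => by
            simp only [const x x₀ _ (h0 _)]
      have hi0 : i.succ ≠ 0 := Fin.succ_ne_zero i
      match n, R, s with
      | 0, R, _ => exact R.elim0
      | 1, R, s =>
        simp only [Fin.forall_fin_one] at hi h0
        grind
      | n + 3, R, _ => exact R.elim0
      | 2, R, s =>
        simp only [Fin.forall_fin_two] at hi h0
        have h01 : (s 0 = 0 ∧ s 1 = i.succ) ∨ (s 0 = i.succ ∧ s 1 = 0) := by grind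
        change Fin 3 at R
        have noChild : ∀ x ∈ X, ∀ b, (v i).1 ≠ x.1 ++ [b] :=
          fun x hx b h => hadj x hx (Or.inl ⟨b, h⟩)
        have noParent : ∀ x ∈ X, ∀ b, x.1 ≠ (v i).1 ++ [b] :=
          fun x hx b h => hadj x hx (Or.inr ⟨b, h⟩)
        rcases h01 with ⟨e0, e1⟩ | ⟨e0, e1⟩ <;> fin_cases R
        · exact QFDef.bot.congr fun x hx => by
            simpa [Structure.RelMap, e0, e1] using noChild x hx false
        · exact QFDef.bot.congr fun x hx => by
            simpa [Structure.RelMap, e0, e1] using noChild x hx true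
        · exact hle.congr fun x hx => by simp [Structure.RelMap, e0, e1]
        · exact QFDef.bot.congr fun x hx => by
            simpa [Structure.RelMap, e0, e1] using noParent x hx false
        · exact QFDef.bot.congr fun x hx => by
            simpa [Structure.RelMap, e0, e1] using noParent x hx true
        · exact hge.congr fun x hx => by simp [Structure.RelMap, e0, e1]

/-- The closure of a set of nodes under lowest common ancestors consists of nodes. -/
theorem lcaClosure_subset_verts (X : Set T.V) {z : List Bool}
    (hz : z ∈ lcaClosure (Subtype.val '' X)) : z ∈ T.verts := by
  refine hz {z | z ∈ T.verts} ⟨?_, fun a ha b _ => T.prefix_closed ha (lcp_prefix_left a b)⟩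
  rintro _ ⟨x, _, rfl⟩
  exact x.2

/-- A parameter outside the closure of `X` can be replaced by a node `w` of the closure in such a
way that the order relations of the nodes of `X` to the old parameter remain definable. -/
theorem exists_replacement {X : Set T.V} (hX : X.Nonempty) (v : Fin ℓ → T.V) (i : Fin ℓ)
    (hv : (v i).1 ∉ lcaClosure (Subtype.val '' X)) :
    ∃ w : T.V, w.1 ∈ lcaClosure (Subtype.val '' X) ∧
      QFDef X (Function.update v i w) (fun x => x.1 <+: (v i).1) ∧
      QFDef X (Function.update v i w) (fun x => (v i).1 <+: x.1) := by
  have le_w : ∀ w : T.V, QFDef X (Function.update v i w) (fun x => x.1 <+: w.1) := fun w => by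
    simpa using QFDef.le_param (X := X) (u := Function.update v i w) i
  have w_le : ∀ w : T.V, QFDef X (Function.update v i w) (fun x => w.1 <+: x.1) := fun w => by
    simpa using QFDef.param_le (X := X) (u := Function.update v i w) i
  by_cases hb : ∃ z ∈ lcaClosure (Subtype.val '' X), (v i).1 <+: z
  · obtain ⟨w, hw, h⟩ := exists_below hv hb
    let w' : T.V := ⟨w, lcaClosure_subset_verts X hw⟩
    exact ⟨w', hw,
      ((le_w w').and (w_le w').not).congr fun x hx => (h x.1 ⟨x, hx, rfl⟩).2.symm,
      (w_le w').congr fun x hx => (h x.1 ⟨x, hx, rfl⟩).1.symm⟩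
  have hb' : ∀ w : T.V, QFDef X (Function.update v i w) (fun x => (v i).1 <+: x.1) := fun w =>
    QFDef.bot.congr fun x hx =>
      ⟨False.elim, fun h => hb ⟨x.1, subset_lcaClosure _ ⟨x, hx, rfl⟩, h⟩⟩
  by_cases ha : ∃ z ∈ Subtype.val '' X, z <+: (v i).1
  · obtain ⟨_, ⟨w, hw, rfl⟩, h⟩ := exists_above ha
    exact ⟨w, subset_lcaClosure _ ⟨w, hw, rfl⟩,
      (le_w w).congr fun x hx => (h x.1 ⟨x, hx, rfl⟩).symm, hb' w⟩
  · obtain ⟨w, hw⟩ := hX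
    exact ⟨w, subset_lcaClosure _ ⟨w, hw, rfl⟩,
      QFDef.bot.congr fun x hx => ⟨False.elim, fun h => ha ⟨x.1, ⟨x, hx, rfl⟩, h⟩⟩, hb' w⟩

end QFDef

/-- If the quantifier-free formula `φ(x; y₁,…,y_ℓ)` with parameters
`v̄ ∈ V(T)^ℓ` is consistent with the nonempty training set `S`, then for every index `i`
there are a node `w ∈ N_suff` and a quantifier-free formula `φ'` such that `φ'` with the
parameter tuple obtained from `v̄` by replacing the `i`-th parameter by `w` is consistent
with `S`. -/
theorem single_parameter_replacement_binary (r ℓ : ℕ) (T : LBTree r)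
    (S : Finset (T.V × Bool)) (hSne : S.Nonempty)
    (hScons : ∀ u : T.V, ¬ ((u, true) ∈ S ∧ (u, false) ∈ S))
    (φ : (BinSig r).Formula (Fin (ℓ + 1))) (hφ : φ.IsQF) (v : Fin ℓ → T.V)
    (hcons : ∀ p ∈ S, (φ.Realize (Fin.cons p.1 v) ↔ p.2 = true)) :
    ∀ i : Fin ℓ, ∃ w ∈ NSuff T S, ∃ φ' : (BinSig r).Formula (Fin (ℓ + 1)), φ'.IsQF ∧
      ∀ p ∈ S, (φ'.Realize (Fin.cons p.1 (Function.update v i w)) ↔ p.2 = true) := by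
  intro i
  by_cases hN : v i ∈ NSuff T S
  · exact ⟨v i, hN, φ, hφ, by simpa using hcons⟩
  let X : Set T.V := {u : T.V | ∃ c, (u, c) ∈ S}
  have hcl : ∀ x ∈ X, x.1 ∈ lcaClosure (Subtype.val '' X) :=
    fun x hx => subset_lcaClosure _ ⟨x, hx, rfl⟩
  have hX : X.Nonempty := let ⟨p, hp⟩ := hSne; ⟨p.1, p.2, hp⟩
  obtain ⟨w, hw, hle, hge⟩ := exists_replacement hX v i fun h => hN ⟨v i, h, Or.inl rfl⟩
  obtain ⟨ψ, hψ, h⟩ := QFDef.of_isQF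
    (fun x hx h => hN ⟨x, hcl x hx, Or.inl h⟩)
    (fun x hx h => hN ⟨x, hcl x hx, Or.inr (Or.inl h)⟩) hle hge hφ
  exact ⟨w, ⟨w, hw, Or.inl rfl⟩, ψ, hψ, fun p hp => (h p.1 ⟨p.2, hp⟩).trans (hcons p hp)⟩
end

section
/- Let T be a finite structure over a relational first-order signature σ with universe V, and let S ⊆ V × {+,−} be a training set containing ℓ+1 positive and ℓ+1 negative examples such that all example nodes satisfy exactly the same atomic formulas in a single free variable. Let v̄ ∈ V^ℓ be parameters such that each vi is atomically related (equal to, or related by a binary relation of σ in either direction) to at most one example node of S. Then for no quantifier-free formula φ(x; y1, …, yℓ) over σ is the hypothesis ⟦φ(x; v̄)⟧^T consistent with S. -/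
/-!
Each of the `ℓ` parameters is atomically related to at most one example node, so among the `ℓ + 1`
positive examples there is one, `p`, related to no parameter, and likewise a negative one, `n`
(`exists_unrelated`). The tuples `(p, v̄)` and `(n, v̄)` satisfy the same atomic formulas
(`realize_atomic_iff`): an atomic formula mentioning only `x` is covered by the hypothesis on the
examples, one mentioning only parameters does not see the example, and one mentioning both `x` and
a parameter is false on both sides. The agreement passes to Boolean combinations (`realize_qf_iff`),
so no quantifier-free formula separates `p` from `n`.
-/

open FirstOrder Language

/-- Number of relation symbols of each arity: a relational signature with unary relation
symbols `α` and binary relation symbols `β` (as in `σ = {E1, E2, ≤, R1, …, Rr}`). -/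
abbrev RelSig (α β : Type) : Language :=
  ⟨fun _ => Empty, fun n =>
    match n with
    | 1 => α
    | 2 => β
    | _ => Empty⟩

/-- `x` is atomically related to `y`: they are equal, or some binary relation of the
signature holds between them in one of the two directions. -/
def AtomRelated (α β : Type) (V : Type) [(RelSig α β).Structure V] (x y : V) : Prop :=
  x = y ∨ ∃ R : (RelSig α β).Relations 2,
    Structure.RelMap R ![x, y] ∨ Structure.RelMap R ![y, x]

/-- Pigeonhole: more example nodes than parameters leave an example unrelated to every parameter. -/
theorem exists_unrelated (α β : Type) (V : Type) [(RelSig α β).Structure V] (ℓ : ℕ)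
    (A : Finset V) (hA : A.card = ℓ + 1) (v : Fin ℓ → V)
    (hrel : ∀ i : Fin ℓ, {x : V | x ∈ A ∧ AtomRelated α β V x (v i)}.Subsingleton) :
    ∃ x ∈ A, ∀ i, ¬ AtomRelated α β V x (v i) := by
  by_contra! h
  choose f hf using h
  have hinj : Function.Injective (fun x : A => f x.1 x.2) := by
    intro x y hxy
    refine Subtype.ext (hrel (f x.1 x.2) ⟨x.2, hf x.1 x.2⟩ ⟨y.2, ?_⟩)
    have hy := hf y.1 y.2
    rwa [← show f x.1 x.2 = f y.1 y.2 from hxy] at hy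
  have := Fintype.card_le_of_injective _ hinj
  simp [hA] at this

/-- The signature has no function symbols, so the terms of a formula are just its variables. -/
theorem term_eq_var (α β : Type) (k : ℕ) (t : (RelSig α β).Term (Fin k ⊕ Fin 0)) :
    ∃ j : Fin k, t = Term.var (Sum.inl j) := by
  cases t with
  | var a =>
    rcases a with j | j
    · exact ⟨j, rfl⟩
    · exact j.elim0
  | func f _ => exact f.elim

section

variable (α β : Type) (V : Type) [(RelSig α β).Structure V] {ℓ : ℕ} (p n : V) (v : Fin ℓ → V)

/-- Two nodes with the same atomic one-variable type, both unrelated to all parameters, satisfy the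
same atomic formulas over the parameters. -/
theorem realize_atomic_iff
    (hsame : ∀ θ : (RelSig α β).Formula (Fin 1), θ.IsAtomic →
      (θ.Realize (fun _ => p) ↔ θ.Realize (fun _ => n)))
    (hp : ∀ i, ¬ AtomRelated α β V p (v i)) (hn : ∀ i, ¬ AtomRelated α β V n (v i))
    (φ : (RelSig α β).Formula (Fin (ℓ + 1))) (hφ : φ.IsAtomic) :
    φ.Realize (Fin.cons p v : Fin (ℓ + 1) → V) ↔ φ.Realize (Fin.cons n v : Fin (ℓ + 1) → V) := by
  have ne_of {x y : V} (h : ¬ AtomRelated α β V x y) : x ≠ y := fun e => h (Or.inl e)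
  have left_of {x y : V} (h : ¬ AtomRelated α β V x y) (R : (RelSig α β).Relations 2) :
      ¬ Structure.RelMap R ![x, y] := fun e => h (Or.inr ⟨R, Or.inl e⟩)
  have right_of {x y : V} (h : ¬ AtomRelated α β V x y) (R : (RelSig α β).Relations 2) :
      ¬ Structure.RelMap R ![y, x] := fun e => h (Or.inr ⟨R, Or.inr e⟩)
  -- The one-variable atomic formulas `R(x, …, x)` transfer between `p` and `n`.
  have diag {k : ℕ} (R : (RelSig α β).Relations k) :
      Structure.RelMap R (fun _ => p) ↔ Structure.RelMap R (fun _ => n) := by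
    have h := hsame (BoundedFormula.rel R (fun _ => Term.var (Sum.inl 0)))
      (BoundedFormula.IsAtomic.rel _ _)
    simpa [Formula.Realize, BoundedFormula.Realize] using h
  cases hφ with
  | equal t₁ t₂ =>
    obtain ⟨a, rfl⟩ := term_eq_var α β _ t₁
    obtain ⟨b, rfl⟩ := term_eq_var α β _ t₂
    simp only [Formula.Realize, BoundedFormula.realize_bdEqual, Term.realize_var, Sum.elim_inl]
    cases a using Fin.cases with
    | zero =>
      cases b using Fin.cases with
      | zero => simp
      | succ b => simp [ne_of (hp b), ne_of (hn b)]
    | succ a =>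
      cases b using Fin.cases with
      | zero => simp [(ne_of (hp a)).symm, (ne_of (hn a)).symm]
      | succ b => simp
  | @rel k R ts =>
    choose j hj using fun i => term_eq_var α β _ (ts i)
    obtain rfl : ts = fun i => Term.var (Sum.inl (j i)) := funext hj
    simp only [Formula.Realize, BoundedFormula.realize_rel, Term.realize_var, Sum.elim_inl]
    match k, R with
    | 0, R => exact R.elim
    | 1, R =>
      have e (x : V) : (fun i => (Fin.cons x v : Fin (ℓ + 1) → V) (j i))
          = fun _ => (Fin.cons x v : Fin (ℓ + 1) → V) (j 0) := by
        funext i; rw [Subsingleton.elim i 0]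
      rw [e p, e n]
      generalize j 0 = a
      cases a using Fin.cases with
      | zero => exact diag R
      | succ a => simp
    | 2, R =>
      have e (x : V) : (fun i => (Fin.cons x v : Fin (ℓ + 1) → V) (j i))
          = ![(Fin.cons x v : Fin (ℓ + 1) → V) (j 0), (Fin.cons x v : Fin (ℓ + 1) → V) (j 1)] := by
        funext i; fin_cases i <;> rfl
      have e' (x : V) : (fun _ : Fin 2 => x) = ![x, x] := by
        funext i; fin_cases i <;> rfl
      rw [e p, e n]
      generalize j 0 = a
      generalize j 1 = b
      cases a using Fin.cases with
      | zero =>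
        cases b using Fin.cases with
        | zero =>
          have h := diag R
          rw [e' p, e' n] at h
          exact h
        | succ b => exact iff_of_false (left_of (hp b) R) (left_of (hn b) R)
      | succ a =>
        cases b using Fin.cases with
        | zero => exact iff_of_false (right_of (hp a) R) (right_of (hn a) R)
        | succ b => exact Iff.rfl
    | (_ + 3), R => exact R.elim

theorem realize_qf_iff
    (hsame : ∀ θ : (RelSig α β).Formula (Fin 1), θ.IsAtomic →
      (θ.Realize (fun _ => p) ↔ θ.Realize (fun _ => n)))
    (hp : ∀ i, ¬ AtomRelated α β V p (v i)) (hn : ∀ i, ¬ AtomRelated α β V n (v i))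
    (φ : (RelSig α β).Formula (Fin (ℓ + 1))) (hφ : φ.IsQF) :
    φ.Realize (Fin.cons p v : Fin (ℓ + 1) → V) ↔ φ.Realize (Fin.cons n v : Fin (ℓ + 1) → V) := by
  induction hφ with
  | falsum => exact Iff.rfl
  | of_isAtomic h => exact realize_atomic_iff α β V p n v hsame hp hn _ h
  | imp _ _ h₁ h₂ => exact imp_congr h₁ h₂

end

/-- Let `T` be a finite structure over a relational signature with universe
`V` and let the training set consist of `ℓ+1` positive examples `P` and `ℓ+1` negative
examples `N` (no node with both signs), all of whose nodes satisfy exactly the same atomic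
formulas in a single free variable. If each parameter `vᵢ` is atomically related to at most
one example node, then no quantifier-free formula `φ(x; y₁,…,y_ℓ)` makes `⟦φ(x; v̄)⟧^T`
consistent with the training set. -/
theorem no_consistent_qf_hypothesis (α β : Type) (V : Type) [Fintype V] [DecidableEq V]
    [(RelSig α β).Structure V] (ℓ : ℕ)
    (P N : Finset V) (hPN : Disjoint P N)
    (hPcard : P.card = ℓ + 1) (hNcard : N.card = ℓ + 1)
    (hsameAtomic : ∀ θ : (RelSig α β).Formula (Fin 1), θ.IsAtomic →
      ∀ x₁ ∈ P ∪ N, ∀ x₂ ∈ P ∪ N, (θ.Realize (fun _ => x₁) ↔ θ.Realize (fun _ => x₂)))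
    (v : Fin ℓ → V)
    (hrel : ∀ i : Fin ℓ, {x : V | x ∈ P ∪ N ∧ AtomRelated α β V x (v i)}.Subsingleton) :
    ∀ φ : (RelSig α β).Formula (Fin (ℓ + 1)), φ.IsQF →
      ¬ ((∀ u ∈ P, φ.Realize (Fin.cons u v)) ∧ (∀ u ∈ N, ¬ φ.Realize (Fin.cons u v))) := by
  rintro φ hφ ⟨hpos, hneg⟩
  obtain ⟨p, hpP, hp⟩ := exists_unrelated α β V ℓ P hPcard v fun i x hx y hy =>
    hrel i ⟨Finset.mem_union_left _ hx.1, hx.2⟩ ⟨Finset.mem_union_left _ hy.1, hy.2⟩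
  obtain ⟨n, hnN, hn⟩ := exists_unrelated α β V ℓ N hNcard v fun i x hx y hy =>
    hrel i ⟨Finset.mem_union_right _ hx.1, hx.2⟩ ⟨Finset.mem_union_right _ hy.1, hy.2⟩
  have hsame : ∀ θ : (RelSig α β).Formula (Fin 1), θ.IsAtomic →
      (θ.Realize (fun _ => p) ↔ θ.Realize (fun _ => n)) := fun θ hθ =>
    hsameAtomic θ hθ p (Finset.mem_union_left _ hpP) n (Finset.mem_union_right _ hnN)
  exact hneg n hnN ((realize_qf_iff α β V p n v hsame hp hn φ hφ).1 (hpos p hpP))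
end

section
/- Let Σ and Q be finite sets and let A be a deterministic bottom-up tree automaton on full binary Σ-labeled trees given by δ₀ : Σ → Q and δ₂ : Σ × Q × Q → Q, with run ρ on a tree T defined by ρ(u) = δ₀(a) for a leaf u labeled a, and ρ(u) = δ₂(a, ρ(u₁), ρ(u₂)) for an inner node u labeled a with first child u₁ and second child u₂. Fix q₀ ∉ Q and put Q' = Q ∪ {q₀}. Fix a downward path P = (u₀, …, u_k) in T with u_k a leaf and u_{j+1} a child of u_j for each j, and label the nodes of P by f_ρ : for the leaf u_k labeled a set f_ρ(u_k) = (a, q₀, L); for an inner node u_j labeled a with on-path child u_{j+1} and other child u'' set f_ρ(u_j) = (a, ρ(u''), L) if u'' is a first child and f_ρ(u_j) = (a, ρ(u''), R) if u'' is a second child. Let A' be the deterministic finite automaton with state set Q', initial state q₀, input alphabet Σ × Q' × {L, R}, and transition function δ' satisfying δ'(q₀, (a, q₀, d)) = δ₀(a) for all a ∈ Σ and d ∈ {L, R}, δ'(p, (a, q, L)) = δ₂(a, q, p) and δ'(p, (a, q, R)) = δ₂(a, p, q) for all a ∈ Σ and p, q ∈ Q. Then for every i with 0 ≤ i ≤ k,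 the state reached by A' from q₀ after reading the word f_ρ(u_k), f_ρ(u_{k−1}), …, f_ρ(u_i) equals ρ(u_i). -/
/-!
The proof is by structural induction on the tree. At an inner node, the word read up to an index
`i ≥ 1` is a word for the on-path child, so the claim is the induction hypothesis for that child
at index `i - 1`. For `i = 0` the automaton first reads the whole word of the on-path child,
reaching the run state of that child, and then the letter of the root; the transition rule for the
direction of the cut-off child combines that state with the state stored in the letter exactly
as `δ2` does. At a leaf the word is a single letter, handled by the rule for the fresh state.
-/

/-- A full binary `A`-labeled tree: every node has zero or exactly two ordered children. -/
inductive BinTree (A : Type*) : Type _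
  | leaf (a : A)
  | node (a : A) (l r : BinTree A)

variable {A Q : Type*}

/-- The run `ρ` of the deterministic bottom-up tree automaton given by `δ0` (leaf transitions)
and `δ2` (inner transitions); `runDTA δ0 δ2 t` is the state assigned to the root of `t`. -/
def runDTA (δ0 : A → Q) (δ2 : A → Q → Q → Q) : BinTree A → Q
  | .leaf a => δ0 a
  | .node a l r => δ2 a (runDTA δ0 δ2 l) (runDTA δ0 δ2 r)

/-- `ds` is a valid downward path (list of directions, `false` = first child, `true` = second
child) from the root of the tree to a leaf. -/
def ValidLeafPath : BinTree A → List Bool → Prop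
  | .leaf _, [] => True
  | .node _ l _, false :: ds => ValidLeafPath l ds
  | .node _ _ r, true :: ds => ValidLeafPath r ds
  | _, _ => False

/-- The subtree rooted at the node reached from the root by following the directions `ds`. -/
def subtreeAt : BinTree A → List Bool → BinTree A
  | t, [] => t
  | .node _ l _, false :: ds => subtreeAt l ds
  | .node _ _ r, true :: ds => subtreeAt r ds
  | .leaf a, _ :: _ => .leaf a

/-- The labeling `f_ρ` of the nodes `u₀, …, u_k` of the path given by `ds`, listed top-down.
A letter `(a, s, d)` consists of the node label `a`, the state `s` of the tree automaton on
the cut-off subtree (`none` encodes the fresh state `q₀`, used at the leaf), and the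
direction `d` of the cut-off child (`false` = `L`, i.e. a first child, `true` = `R`, i.e. a
second child; at the leaf `d = L`). -/
def pathLabels (δ0 : A → Q) (δ2 : A → Q → Q → Q) :
    BinTree A → List Bool → List (A × Option Q × Bool)
  | .leaf a, [] => [(a, none, false)]
  | .node a l r, false :: ds => (a, some (runDTA δ0 δ2 r), true) :: pathLabels δ0 δ2 l ds
  | .node a l r, true :: ds => (a, some (runDTA δ0 δ2 l), false) :: pathLabels δ0 δ2 r ds
  | .leaf _, _ :: _ => []
  | .node _ _ _, [] => []

/-- Let `A'` be a deterministic finite automaton with state set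
`Q' = Q ∪ {q₀}` (encoded as `Option Q`, `none = q₀`), initial state `q₀`, and a transition
function `δ'` satisfying `δ'(q₀,(a,q₀,d)) = δ₀(a)`, `δ'(p,(a,q,L)) = δ₂(a,q,p)` and
`δ'(p,(a,q,R)) = δ₂(a,p,q)`. Then for every downward path `ds` from the root to a leaf and
every `i ≤ k`, the state reached by `A'` from `q₀` after reading the word
`f_ρ(u_k), f_ρ(u_{k−1}), …, f_ρ(u_i)` equals `ρ(u_i)`, the state of the bottom-up tree
automaton at `u_i`. -/
theorem dfa_simulates_dta_along_path
    (δ0 : A → Q) (δ2 : A → Q → Q → Q)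
    (δ' : Option Q → A × Option Q × Bool → Option Q)
    (hδ'leaf : ∀ (a : A) (d : Bool), δ' none (a, none, d) = some (δ0 a))
    (hδ'L : ∀ (p q : Q) (a : A), δ' (some p) (a, some q, false) = some (δ2 a q p))
    (hδ'R : ∀ (p q : Q) (a : A), δ' (some p) (a, some q, true) = some (δ2 a p q))
    (t : BinTree A) (ds : List Bool) (hds : ValidLeafPath t ds)
    (i : ℕ) (hi : i ≤ ds.length) :
    ((pathLabels δ0 δ2 t ds).drop i).reverse.foldl δ' none =
      some (runDTA δ0 δ2 (subtreeAt t (ds.take i))) := by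
  induction t generalizing ds i with
  | leaf a =>
    cases ds with
    | nil =>
      obtain rfl : i = 0 := by simpa using hi
      simp [pathLabels, subtreeAt, runDTA, hδ'leaf]
    | cons d ds => simp [ValidLeafPath] at hds
  | node a l r ihl ihr =>
    cases ds with
    | nil => simp [ValidLeafPath] at hds
    | cons d ds =>
      cases d with
      | false =>
        cases i with
        | zero =>
          have h := ihl ds hds 0 (Nat.zero_le _)
          simp only [List.drop_zero, List.take_zero, subtreeAt] at h
          simp [pathLabels, subtreeAt, runDTA, List.foldl_append, -List.foldl_reverse, h, hδ'R]
        | succ j =>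
          simpa only [pathLabels, List.drop_succ_cons, List.take_succ_cons, subtreeAt] using
            ihl ds hds j (Nat.le_of_succ_le_succ hi)
      | true =>
        cases i with
        | zero =>
          have h := ihr ds hds 0 (Nat.zero_le _)
          simp only [List.drop_zero, List.take_zero, subtreeAt] at h
          simp [pathLabels, subtreeAt, runDTA, List.foldl_append, -List.foldl_reverse, h, hδ'L]
        | succ j =>
          simpa only [pathLabels, List.drop_succ_cons, List.take_succ_cons, subtreeAt] using
            ihr ds hds j (Nat.le_of_succ_le_succ hi)
end

section
/- Let Σ be a finite alphabet, Y a finite set of parameters, M a monoid, h a monoid homomorphism from the free monoid over the alphabet Σ × 2^Y to M, and F ⊆ M. Assume that for every word w over Σ × 2^Y with h(w) ∈ F, every y ∈ Y occurs in the second component of exactly one letter of w. Then for all words w and w' over Σ × 2^Y with h(w) = h(w'), if there exist words u and u'' such that h(u·w·u'') ∈ F, then params(w) = params(w'). In particular, there exists a function p : M → 2^Y such that params(w) = p(h(w)) for every word w that can be extended by a prefix and a suffix to a word mapped by h into F. -/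
/-! For each `y`, the number of letters of a word containing `y` is additive under concatenation.
If `h w = h w'` and `h (u * w * u'') ∈ F`, then also `h (u * w' * u'') ∈ F`, so both words have
exactly one letter containing `y`. Cancelling the contributions of `u` and `u''` shows that `y`
occurs equally often in `w` and `w'`, hence in one iff in the other. The function `p` sends `m` to
the parameter set of an extendable word over `m`, if there is one. -/

/-- `params w`: the set of parameters occurring in the second component of at least one
letter of the word `w` over the alphabet `S × 2^Y`. -/
def params {S Y : Type*} [DecidableEq Y] (w : FreeMonoid (S × Finset Y)) : Finset Y :=
  ((FreeMonoid.toList w).map Prod.snd).foldr (· ∪ ·) ∅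

theorem mem_params_iff {S Y : Type*} [DecidableEq Y] (w : FreeMonoid (S × Finset Y)) (y : Y) :
    y ∈ params w ↔ 0 < (FreeMonoid.toList w).countP (fun l => decide (y ∈ l.2)) := by
  have key : ∀ L : List (S × Finset Y),
      y ∈ (L.map Prod.snd).foldr (· ∪ ·) ∅ ↔ ∃ l ∈ L, y ∈ l.2 := by
    intro L
    induction L with
    | nil => simp
    | cons a L ih =>
      rw [List.map_cons, List.foldr_cons, Finset.mem_union, ih, List.exists_mem_cons_iff]
  rw [List.countP_pos_iff]
  simpa only [params, decide_eq_true_eq] using key (FreeMonoid.toList w)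

/-- Let `h` be a monoid homomorphism from the free monoid over `Σ × 2^Y`
to `M` and `F ⊆ M`, and assume that in every word mapped into `F`, every parameter `y ∈ Y`
occurs in exactly one letter. Then any two words with the same image under `h` that can both
be extended (by a prefix and a suffix) to words mapped into `F` carry the same parameter set;
in particular there is a function `p : M → 2^Y` with `params w = p (h w)` for every word `w`
extendable to a word mapped into `F`. -/
theorem params_determined_by_monoid_element (S Y M : Type*) [Fintype S] [Fintype Y]
    [DecidableEq Y] [Monoid M]
    (h : FreeMonoid (S × Finset Y) →* M) (F : Set M)
    (hunique : ∀ w : FreeMonoid (S × Finset Y), h w ∈ F →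
      ∀ y : Y, (FreeMonoid.toList w).countP (fun l => decide (y ∈ l.2)) = 1) :
    (∀ w w' : FreeMonoid (S × Finset Y), h w = h w' →
      (∃ u u'' : FreeMonoid (S × Finset Y), h (u * w * u'') ∈ F) → params w = params w') ∧
    ∃ p : M → Finset Y, ∀ w : FreeMonoid (S × Finset Y),
      (∃ u u'' : FreeMonoid (S × Finset Y), h (u * w * u'') ∈ F) → params w = p (h w) := by
  have main : ∀ w w' : FreeMonoid (S × Finset Y), h w = h w' →
      (∃ u u'' : FreeMonoid (S × Finset Y), h (u * w * u'') ∈ F) → params w = params w' := by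
    rintro w w' hw ⟨u, u'', hF⟩
    have hF' : h (u * w' * u'') ∈ F := by
      simpa only [map_mul, hw] using hF
    ext y
    have h1 := hunique _ hF y
    have h2 := hunique _ hF' y
    simp only [FreeMonoid.toList_mul, List.countP_append] at h1 h2
    rw [mem_params_iff, mem_params_iff]
    omega
  refine ⟨main, ?_⟩
  classical
  let E : M → FreeMonoid (S × Finset Y) → Prop := fun m w =>
    h w = m ∧ ∃ u u'' : FreeMonoid (S × Finset Y), h (u * w * u'') ∈ F
  refine ⟨fun m => if hm : ∃ w, E m w then params hm.choose else ∅, fun w hw => ?_⟩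
  have hm : ∃ v, E (h w) v := ⟨w, rfl, hw⟩
  simp only [dif_pos hm]
  exact main _ _ hm.choose_spec.1.symm hw
end

section
/- Let Σ be a finite alphabet, Y a finite set of parameters, M a monoid, h a monoid homomorphism from the free monoid over the alphabet Σ × 2^Y to M, and F ⊆ M. Assume that for every word w over Σ × 2^Y with h(w) ∈ F, every y ∈ Y occurs in the second component of exactly one letter of w. If w is a word over Σ × 2^Y such that h(w) is idempotent (h(w)·h(w) = h(w)) and there exist words u and u'' with h(u·w·u'') ∈ F, then params(w) = ∅, i.e., every letter of w carries the empty parameter set. -/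
/-- Let `h` be a monoid homomorphism from the free monoid over `Σ × 2^Y`
to `M` and `F ⊆ M`, and assume that in every word mapped into `F`, every parameter `y ∈ Y`
occurs in exactly one letter. If `h w` is idempotent and `w` can be extended by a prefix and
a suffix to a word mapped into `F`, then `params w = ∅`, i.e., every letter of `w` carries
the empty parameter set. -/
theorem idempotent_word_has_no_params (S Y M : Type*) [Fintype S] [Fintype Y]
    [DecidableEq Y] [Monoid M]
    (h : FreeMonoid (S × Finset Y) →* M) (F : Set M)
    (hunique : ∀ w : FreeMonoid (S × Finset Y), h w ∈ F →
      ∀ y : Y, (FreeMonoid.toList w).countP (fun l => decide (y ∈ l.2)) = 1)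
    (w : FreeMonoid (S × Finset Y)) (hidem : h w * h w = h w)
    (hext : ∃ u u'' : FreeMonoid (S × Finset Y), h (u * w * u'') ∈ F) :
    params w = ∅ ∧ ∀ l ∈ FreeMonoid.toList w, l.2 = ∅ := by
  obtain ⟨u, u'', hF⟩ := hext
  have hF2 : h (u * (w * w) * u'') ∈ F := by
    simpa only [map_mul, hidem] using hF
  have hletters : ∀ l ∈ FreeMonoid.toList w, l.2 = ∅ := by
    intro l hl
    refine Finset.eq_empty_of_forall_notMem fun y hy => ?_
    have h1 := hunique _ hF y
    have h2 := hunique _ hF2 y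
    simp only [FreeMonoid.toList_mul, List.countP_append] at h1 h2
    -- Both totals are 1 and differ by the number of occurrences of `y` in `w`.
    have h0 : (FreeMonoid.toList w).countP (fun l => decide (y ∈ l.2)) = 0 := by omega
    exact List.countP_eq_zero.mp h0 l hl (by simpa using hy)
  refine ⟨?_, hletters⟩
  have hfold : ∀ L : List (S × Finset Y), (∀ l ∈ L, l.2 = ∅) →
      (L.map Prod.snd).foldr (· ∪ ·) ∅ = ∅ := by
    intro L hL
    induction L with
    | nil => rfl
    | cons a L ih =>
      simp [hL a (by simp), ih fun l hl => hL l (by simp [hl])]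
  exact hfold _ hletters
end
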